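/- arXiv:2405.11217 — 5 statements merged into one kernel-verified Lean document; each statement's English description precedes it below -/
import Mathlib

section
/- Let f, g : ℂ → ℂ with g entire, and suppose f ∘ g = g ∘ f. Assume Property A in the escaping form for the pair (f, g): for every z ∈ ℂ, if ‖f^[n](z)‖ → ∞ as n → ∞ then ‖g(f^[n](z))‖ → ∞ as n → ∞. Then the escaping set I(f) is completely invariant under the composition f ∘ g: for every z ∈ ℂ, z ∈ I(f) if and only if (f ∘ g)(z) ∈ I(f). -/
open Filter

/-- The escaping set `I(f)`: points whose orbit tends to infinity in norm. -/
def escapingSet (f : ℂ → ℂ) : Set ℂ :=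
  {z | Tendsto (fun n : ℕ => ‖f^[n] z‖) atTop atTop}

/-- The filled-in Julia set `K(f)`: points with bounded orbit. -/
def filledJuliaSet (f : ℂ → ℂ) : Set ℂ :=
  {z | ∃ M : ℝ, ∀ n : ℕ, ‖f^[n] z‖ ≤ M}

/-- The bungee set `BU(f) = ℂ \ (I(f) ∪ K(f))`. -/
def bungeeSet (f : ℂ → ℂ) : Set ℂ :=
  Set.univ \ (escapingSet f ∪ filledJuliaSet f)

/-!
A semiconjugacy `g` from `f` to `h` carries the `f`-orbit of `x` to the `h`-orbit of `g x`.
Property A says that escape of the first orbit forces escape of the second; conversely, a continuous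
map sends compact sets to compact sets, so an orbit whose image escapes must itself escape.
Passing from `g x` to `h (g x)` only drops the first point of an orbit.
-/

/-- The escaping set of a self-map of a topological space. Escape to infinity is encoded as
convergence to `cocompact X`, i.e. the orbit eventually leaves every compact set, so that the
notion needs no norm; on `ℂ` it is `escapingSet`. -/
def cocompactEscapingSet {X : Type*} [TopologicalSpace X] (f : X → X) : Set X :=
  {x | Tendsto (fun n : ℕ => f^[n] x) atTop (cocompact X)}

theorem tendsto_norm_atTop_iff_cocompact {α E : Type*} [SeminormedAddGroup E] [ProperSpace E]
    {l : Filter α} {u : α → E} :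
    Tendsto (fun a => ‖u a‖) l atTop ↔ Tendsto u l (cocompact E) := by
  rw [tendsto_norm_atTop_iff_cobounded, Metric.cobounded_eq_cocompact]

theorem escapingSet_eq_cocompactEscapingSet (f : ℂ → ℂ) :
    escapingSet f = cocompactEscapingSet f :=
  Set.ext fun _ => tendsto_norm_atTop_iff_cocompact

theorem apply_mem_cocompactEscapingSet_iff_of_semiconj {X Y : Type*} [TopologicalSpace Y]
    {f : X → X} {h : Y → Y} {g : X → Y} (hgfh : Function.Semiconj g f h) {x : X} :
    g x ∈ cocompactEscapingSet h ↔ Tendsto (fun n : ℕ => g (f^[n] x)) atTop (cocompact Y) :=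
  tendsto_congr fun n => (hgfh.iterate_right n x).symm

section

variable {X Y : Type*} [TopologicalSpace X] [TopologicalSpace Y]

theorem tendsto_cocompact_of_comp {α : Type*} {l : Filter α} {u : α → X} {g : X → Y}
    (hg : Continuous g) (h : Tendsto (g ∘ u) l (cocompact Y)) : Tendsto u l (cocompact X) :=
  (tendsto_comap_iff.2 h).mono_right (comap_cocompact_le hg)

theorem apply_mem_cocompactEscapingSet_iff {f : X → X} {x : X} :
    f x ∈ cocompactEscapingSet f ↔ x ∈ cocompactEscapingSet f :=
  tendsto_add_atTop_iff_nat (f := fun n => f^[n] x) 1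

theorem escapingSet_completely_invariant_under_comp_general {f : X → X} {h : Y → Y} {g : X → Y}
    (hg : Continuous g) (hgfh : Function.Semiconj g f h) {x : X}
    (hA : x ∈ cocompactEscapingSet f →
      Tendsto (fun n : ℕ => g (f^[n] x)) atTop (cocompact Y)) :
    x ∈ cocompactEscapingSet f ↔ (h ∘ g) x ∈ cocompactEscapingSet h :=
  calc x ∈ cocompactEscapingSet f
    _ ↔ Tendsto (fun n : ℕ => g (f^[n] x)) atTop (cocompact Y) :=
      ⟨hA, tendsto_cocompact_of_comp hg⟩
    _ ↔ g x ∈ cocompactEscapingSet h :=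
      (apply_mem_cocompactEscapingSet_iff_of_semiconj hgfh).symm
    _ ↔ (h ∘ g) x ∈ cocompactEscapingSet h := apply_mem_cocompactEscapingSet_iff.symm

end

theorem escapingSet_completely_invariant_under_comp
    (f g : ℂ → ℂ) (hg : Differentiable ℂ g) (hcomm : f ∘ g = g ∘ f)
    (hA : ∀ z : ℂ, Tendsto (fun n : ℕ => ‖f^[n] z‖) atTop atTop →
      Tendsto (fun n : ℕ => ‖g (f^[n] z)‖) atTop atTop) :
    ∀ z : ℂ, z ∈ escapingSet f ↔ (f ∘ g) z ∈ escapingSet f := by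
  simp only [tendsto_norm_atTop_iff_cocompact, escapingSet_eq_cocompactEscapingSet] at hA ⊢
  exact fun z => escapingSet_completely_invariant_under_comp_general hg.continuous
    (Function.semiconj_iff_comp_eq.2 hcomm.symm) (hA z)
end

section
/- Let f, g : ℂ → ℂ with g entire, and suppose f ∘ g = g ∘ f. Assume Property A for the pair (f, g) in both forms: (escaping form) for every z ∈ ℂ, if ‖f^[n](z)‖ → ∞ as n → ∞ then ‖g(f^[n](z))‖ → ∞ as n → ∞; (bounded form) for every z ∈ ℂ, if the sequence (g(f^[n](z)))_{n∈ℕ} is bounded then the sequence (f^[n](z))_{n∈ℕ} is bounded. Then the bungee set BU(f) is completely invariant under g: for every z ∈ ℂ, z ∈ BU(f) if and only if g(z) ∈ BU(f). -/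
/-!
Since `g` commutes with `f`, the `f`-orbit of `g z` is the `g`-image of the `f`-orbit of `z`. A
continuous map of `ℂ` sends bounded sets to bounded sets, so it preserves bounded orbits and,
dually, an orbit whose image escapes must itself escape. Property A supplies the two converse
implications.
-/

open Filter

open Bornology

theorem isBounded_image_of_continuous {X Y : Type*} [PseudoMetricSpace X] [ProperSpace X]
    [PseudoMetricSpace Y] {g : X → Y} (hg : Continuous g) {s : Set X} (hs : IsBounded s) :
    IsBounded (g '' s) :=
  (hs.isCompact_closure.image hg).isBounded.subset (Set.image_mono subset_closure)

theorem tendsto_cobounded_of_comp {ι X Y : Type*} [Bornology X] [Bornology Y] {l : Filter ι}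
    {g : X → Y} {u : ι → X} (hg : ∀ ⦃s : Set X⦄, IsBounded s → IsBounded (g '' s))
    (h : Tendsto (g ∘ u) l (cobounded Y)) : Tendsto u l (cobounded X) :=
  (tendsto_comap_iff.2 h).mono_right (comap_cobounded_le_iff.2 hg)

theorem mem_escapingSet_iff_tendsto_cobounded {f : ℂ → ℂ} {z : ℂ} :
    z ∈ escapingSet f ↔ Tendsto (fun n : ℕ => f^[n] z) atTop (cobounded ℂ) :=
  tendsto_norm_atTop_iff_cobounded

theorem mem_filledJuliaSet_iff_isBounded_range {f : ℂ → ℂ} {z : ℂ} :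
    z ∈ filledJuliaSet f ↔ IsBounded (Set.range fun n : ℕ => f^[n] z) := by
  simp only [filledJuliaSet, Set.mem_ofPred_eq, isBounded_iff_forall_norm_le, Set.forall_mem_range]

theorem mem_bungeeSet_iff {f : ℂ → ℂ} {z : ℂ} :
    z ∈ bungeeSet f ↔ z ∉ escapingSet f ∧ z ∉ filledJuliaSet f := by
  simp only [bungeeSet, Set.mem_sdiff, Set.mem_univ, true_and, Set.mem_union, not_or]

section Commute

variable {f g : ℂ → ℂ} {z : ℂ}

theorem map_mem_escapingSet_iff_of_commute (hcomm : Function.Commute f g) :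
    g z ∈ escapingSet f ↔ Tendsto (fun n : ℕ => ‖g (f^[n] z)‖) atTop atTop := by
  simp only [escapingSet, Set.mem_ofPred_eq, (hcomm.iterate_left _).eq]

theorem map_mem_filledJuliaSet_iff_of_commute (hcomm : Function.Commute f g) :
    g z ∈ filledJuliaSet f ↔ ∃ M : ℝ, ∀ n : ℕ, ‖g (f^[n] z)‖ ≤ M := by
  simp only [filledJuliaSet, Set.mem_ofPred_eq, (hcomm.iterate_left _).eq]

theorem mem_escapingSet_of_map_mem (hcomm : Function.Commute f g)
    (hg : ∀ ⦃s : Set ℂ⦄, IsBounded s → IsBounded (g '' s)) (h : g z ∈ escapingSet f) :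
    z ∈ escapingSet f := by
  rw [map_mem_escapingSet_iff_of_commute hcomm, tendsto_norm_atTop_iff_cobounded] at h
  exact mem_escapingSet_iff_tendsto_cobounded.2 (tendsto_cobounded_of_comp hg h)

theorem map_mem_filledJuliaSet (hcomm : Function.Commute f g)
    (hg : ∀ ⦃s : Set ℂ⦄, IsBounded s → IsBounded (g '' s)) (h : z ∈ filledJuliaSet f) :
    g z ∈ filledJuliaSet f := by
  rw [mem_filledJuliaSet_iff_isBounded_range] at h ⊢
  simpa only [(hcomm.iterate_left _).eq, ← Set.range_comp'] using hg h

theorem bungeeSet_completely_invariant_under_commuting_general (hcomm : Function.Commute f g)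
    (hg : ∀ ⦃s : Set ℂ⦄, IsBounded s → IsBounded (g '' s))
    (hAesc : Tendsto (fun n : ℕ => ‖f^[n] z‖) atTop atTop →
      Tendsto (fun n : ℕ => ‖g (f^[n] z)‖) atTop atTop)
    (hAbdd : (∃ M : ℝ, ∀ n : ℕ, ‖g (f^[n] z)‖ ≤ M) → ∃ M : ℝ, ∀ n : ℕ, ‖f^[n] z‖ ≤ M) :
    z ∈ bungeeSet f ↔ g z ∈ bungeeSet f := by
  have hesc : z ∈ escapingSet f ↔ g z ∈ escapingSet f :=
    ⟨fun h => (map_mem_escapingSet_iff_of_commute hcomm).2 (hAesc h),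
      mem_escapingSet_of_map_mem hcomm hg⟩
  have hbdd : z ∈ filledJuliaSet f ↔ g z ∈ filledJuliaSet f :=
    ⟨map_mem_filledJuliaSet hcomm hg,
      fun h => hAbdd ((map_mem_filledJuliaSet_iff_of_commute hcomm).1 h)⟩
  rw [mem_bungeeSet_iff, mem_bungeeSet_iff, hesc, hbdd]

end Commute

theorem bungeeSet_completely_invariant_under_commuting
    (f g : ℂ → ℂ) (hg : Differentiable ℂ g) (hcomm : f ∘ g = g ∘ f)
    (hAesc : ∀ z : ℂ, Tendsto (fun n : ℕ => ‖f^[n] z‖) atTop atTop →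
      Tendsto (fun n : ℕ => ‖g (f^[n] z)‖) atTop atTop)
    (hAbdd : ∀ z : ℂ, (∃ M : ℝ, ∀ n : ℕ, ‖g (f^[n] z)‖ ≤ M) →
      ∃ M : ℝ, ∀ n : ℕ, ‖f^[n] z‖ ≤ M) :
    ∀ z : ℂ, z ∈ bungeeSet f ↔ g z ∈ bungeeSet f :=
  fun z => bungeeSet_completely_invariant_under_commuting_general (congrFun hcomm)
    (fun _ => isBounded_image_of_continuous hg.continuous) (hAesc z) (hAbdd z)
end

section
/- The entire functions f(z) = 1 + z + e^{−z} and g(z) = 1 + z + e^{−z} + 2πi (where i is the imaginary unit) commute: f ∘ g = g ∘ f. -/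
open Filter

/-!
The displacement `f z - z = 1 + exp (-z)` is `2πi`-periodic, so `f` commutes with the translation by
`2πi`. It also commutes with itself, hence with the composite `g` of `f` and that translation.
-/

theorem commute_add_right_iff_periodic_sub_self {G : Type*} [AddGroup G] {f : G → G} {c : G} :
    Function.Commute f (· + c) ↔ Function.Periodic (fun z => f z - z) c :=
  forall_congr' fun z => by
    beta_reduce
    rw [sub_add_eq_sub_sub_swap, sub_left_inj, sub_eq_iff_eq_add]

theorem commute_add_const_of_periodic_sub_self {G : Type*} [AddGroup G] {f : G → G} {c : G}
    (h : Function.Periodic (fun z => f z - z) c) : Function.Commute f (fun z => f z + c) :=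
  (commute_add_right_iff_periodic_sub_self.mpr h).comp_right (.refl f)

theorem periodic_cexp_neg :
    Function.Periodic (fun z : ℂ => Complex.exp (-z)) (2 * Real.pi * Complex.I) := by
  simpa only [zero_sub] using Complex.exp_periodic.const_sub 0

theorem fatou_map_translate_commutes
    (f g : ℂ → ℂ)
    (hf : ∀ z : ℂ, f z = 1 + z + Complex.exp (-z))
    (hg : ∀ z : ℂ, g z = 1 + z + Complex.exp (-z) + 2 * Real.pi * Complex.I) :
    f ∘ g = g ∘ f := by
  have f_sub_self : (fun z => f z - z) = fun z => 1 + Complex.exp (-z) :=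
    funext fun z => by rw [hf]; ring
  have displacement_periodic : Function.Periodic (fun z => f z - z) (2 * Real.pi * Complex.I) :=
    f_sub_self ▸ periodic_cexp_neg.comp (1 + ·)
  have g_eq : g = fun z => f z + 2 * Real.pi * Complex.I :=
    funext fun z => by rw [hg, hf]
  rw [g_eq]
  exact (commute_add_const_of_periodic_sub_self displacement_periodic).comp_eq
end

section
/- Let k ≥ 1 be a natural number, let a ∈ ℂ satisfy a^k = 1, and let c ∈ ℂ. Define f(z) = z·exp(c·z^k) and g(z) = a·f(z). Then for every n ∈ ℕ and every z ∈ ℂ, (f ∘ g)^[n](z) = a^n · f^[2n](z); in particular (f ∘ g)^[k] = f^[2k]. -/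
open Filter

/-!
Since `a ^ k = 1`, the map `f` commutes with multiplication by `a`, so `f ∘ g = f ∘ (a * ·) ∘ f` is
the composition of the commuting maps `a * ·` and `f^[2]`, whose iterates can be taken separately.
-/

theorem iterate_comp_comp_self_of_commute {α : Type*} {f h : α → α} (hfh : Function.Commute f h)
    (n : ℕ) : (f ∘ h ∘ f)^[n] = h^[n] ∘ f^[2 * n] :=
  calc
    (f ∘ h ∘ f)^[n] = (h ∘ f^[2])^[n] := by
      rw [← Function.comp_assoc, hfh.comp_eq]
      rfl
    _ = h^[n] ∘ f^[2 * n] := by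
      rw [(hfh.symm.iterate_right 2).comp_iterate, ← Function.iterate_mul]

theorem commute_mul_left_of_forall_eq_mul_pow {M : Type*} [CommMonoid M] {k : ℕ} {a : M}
    (ha : a ^ k = 1) {f φ : M → M} (hf : ∀ z, f z = z * φ (z ^ k)) :
    Function.Commute f (a * ·) := fun z => by
  rw [hf, hf, mul_pow, ha, one_mul, mul_assoc]

theorem root_of_unity_multiple_comp_iterate_general {M α : Type*} [Monoid M] [MulAction M α]
    {k : ℕ} {a : M} (ha : a ^ k = 1) {f g : α → α} (hf : Function.Commute f (a • ·))
    (hg : ∀ z, g z = a • f z) :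
    (∀ n : ℕ, ∀ z : α, (f ∘ g)^[n] z = a ^ n • f^[2 * n] z) ∧ (f ∘ g)^[k] = f^[2 * k] := by
  obtain rfl : g = (a • ·) ∘ f := funext hg
  have iterate_eq (n : ℕ) (z : α) : (f ∘ (a • ·) ∘ f)^[n] z = a ^ n • f^[2 * n] z := by
    rw [iterate_comp_comp_self_of_commute hf, smul_iterate, Function.comp_apply]
  refine ⟨iterate_eq, funext fun z => ?_⟩
  rw [iterate_eq, ha, one_smul]

theorem root_of_unity_multiple_comp_iterate
    (k : ℕ) (hk : 1 ≤ k) (a c : ℂ) (ha : a ^ k = 1)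
    (f g : ℂ → ℂ)
    (hf : ∀ z : ℂ, f z = z * Complex.exp (c * z ^ k))
    (hg : ∀ z : ℂ, g z = a * f z) :
    (∀ n : ℕ, ∀ z : ℂ, (f ∘ g)^[n] z = a ^ n * f^[2 * n] z) ∧
      (f ∘ g)^[k] = f^[2 * k] :=
  root_of_unity_multiple_comp_iterate_general ha
    (commute_mul_left_of_forall_eq_mul_pow (φ := fun w => Complex.exp (c * w)) ha hf) hg
end

section
/- Let k ≥ 1 be a natural number, let a ∈ ℂ satisfy a^k = 1, and let c ∈ ℂ. Define f(z) = z·exp(c·z^k) and g(z) = a·f(z). Then f and g have equal escaping sets, equal filled-in Julia sets, and equal bungee sets: I(f) = I(g), K(f) = K(g), and BU(f) = BU(g). -/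
open Filter

/-!
Multiplication by a `k`-th root of unity `a` preserves norms and commutes with every map
`z ↦ z * φ (z ^ k)`. Hence the `n`-th iterate of `a * f` is `a ^ n` times that of `f`, so
corresponding orbit points have the same norm, and the three sets depend only on these norms.
-/

theorem norm_iterate_comp_of_commute {E : Type*} [Norm E] {T f : E → E}
    (hT : ∀ x, ‖T x‖ = ‖x‖) (hcomm : Function.Commute T f) (n : ℕ) (x : E) :
    ‖(T ∘ f)^[n] x‖ = ‖f^[n] x‖ := by
  have norm_iterate : (‖·‖) ∘ T^[n] = (‖·‖) := Function.iterate_invariant (funext hT) n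
  rw [hcomm.comp_iterate]
  exact congrFun norm_iterate (f^[n] x)

theorem commute_mul_left_of_eq_mul_comp_pow {M : Type*} [CommMonoid M] {k : ℕ} {a : M}
    (ha : a ^ k = 1) {φ f : M → M} (hf : ∀ z, f z = z * φ (z ^ k)) :
    Function.Commute (a * ·) f := fun z => by
  simp only [hf, mul_pow, ha, one_mul, mul_assoc]

section Congr

variable {f g : ℂ → ℂ}

theorem escapingSet_congr (h : ∀ (n : ℕ) (z : ℂ), ‖f^[n] z‖ = ‖g^[n] z‖) :
    escapingSet f = escapingSet g := by
  simp only [escapingSet, h]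

theorem filledJuliaSet_congr (h : ∀ (n : ℕ) (z : ℂ), ‖f^[n] z‖ = ‖g^[n] z‖) :
    filledJuliaSet f = filledJuliaSet g := by
  simp only [filledJuliaSet, h]

theorem bungeeSet_congr (h : ∀ (n : ℕ) (z : ℂ), ‖f^[n] z‖ = ‖g^[n] z‖) :
    bungeeSet f = bungeeSet g := by
  rw [bungeeSet, bungeeSet, escapingSet_congr h, filledJuliaSet_congr h]

end Congr

theorem root_of_unity_multiple_same_dynamics_general
    {k : ℕ} (hk : 1 ≤ k) {a : ℂ} (ha : a ^ k = 1) {φ f g : ℂ → ℂ}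
    (hf : ∀ z : ℂ, f z = z * φ (z ^ k)) (hg : ∀ z : ℂ, g z = a * f z) :
    escapingSet f = escapingSet g ∧ filledJuliaSet f = filledJuliaSet g ∧
      bungeeSet f = bungeeSet g := by
  have norm_mul_left (z : ℂ) : ‖a * z‖ = ‖z‖ := by
    rw [norm_mul, Complex.norm_eq_one_of_pow_eq_one ha (Nat.one_le_iff_ne_zero.mp hk), one_mul]
  have hcomm : Function.Commute (a * ·) f := commute_mul_left_of_eq_mul_comp_pow ha hf
  have hiter (n : ℕ) (z : ℂ) : ‖f^[n] z‖ = ‖g^[n] z‖ := by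
    obtain rfl : g = (a * ·) ∘ f := funext hg
    exact (norm_iterate_comp_of_commute norm_mul_left hcomm n z).symm
  exact ⟨escapingSet_congr hiter, filledJuliaSet_congr hiter, bungeeSet_congr hiter⟩

theorem root_of_unity_multiple_same_dynamics
    (k : ℕ) (hk : 1 ≤ k) (a c : ℂ) (ha : a ^ k = 1)
    (f g : ℂ → ℂ)
    (hf : ∀ z : ℂ, f z = z * Complex.exp (c * z ^ k))
    (hg : ∀ z : ℂ, g z = a * f z) :
    escapingSet f = escapingSet g ∧ filledJuliaSet f = filledJuliaSet g ∧
      bungeeSet f = bungeeSet g :=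
  root_of_unity_multiple_same_dynamics_general hk ha (φ := fun w => Complex.exp (c * w)) hf hg
end
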